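/- There is no binary operation f : A × A → A on a set A with more than one element satisfying, for all x, y ∈ A, the four identities f(f(x,y), y) = x, f(x, f(y,x)) = y, f(f(x,y), f(y,x)) = x, and f(f(y,x), f(x,y)) = y. -/

import Mathlib

/-- There is no binary operation `f : A × A → A` on a set `A` with more
than one element satisfying, for all `x, y ∈ A`, the four identities
`f(f(x,y), y) = x`, `f(x, f(y,x)) = y`, `f(f(x,y), f(y,x)) = x`, and
`f(f(y,x), f(x,y)) = y`. -/
theorem no_self_decoding_orthogonal_square
    (A : Type) [Nontrivial A] (f : A → A → A)
    (h1 : ∀ x y : A, f (f x y) y = x)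
    (h2 : ∀ x y : A, f x (f y x) = y)
    (h3 : ∀ x y : A, f (f x y) (f y x) = x)
    (h4 : ∀ x y : A, f (f y x) (f x y) = y) : False := by
  -- Right translation by `x` is an involution (`h1`) with left inverse the left
  -- translation by `x` (`h2`), so the two translations coincide.
  have comm : ∀ x y : A, f x y = f y x := fun x y => by
    have h := h2 x (f y x)
    rwa [h1 y x] at h
  obtain ⟨x, y, hxy⟩ := exists_pair_ne A
  apply hxy
  -- By commutativity, `h3` and `h4` evaluate the same product to `x` and to `y`.
  calc x = f (f x y) (f y x) := (h3 x y).symm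
    _ = f (f y x) (f x y) := comm _ _
    _ = y := h4 x y
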